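/- Let n ≥ 2 and let A = (a_{rs}) ∈ ℂ^{n×n} satisfy Re(Σ_{r,s} a_{rs}ξ_rξ_s) > 0 for all ξ ∈ ℝⁿ∖{0}, and let A_sym := (A + Aᵀ)/2. Then there exists d ∈ ℂ with d² = det(A_sym) such that the function P(x') := (2/(ω_{n-1}d)) ⟨A_sym^{-1}(x',1),(x',1)⟩^{-n/2}, x' ∈ ℝ^{n-1}, is a Poisson kernel for L = Σ_{r,s} a_{rs}∂_r∂_s in ℝⁿ₊, meaning: (a) there is C > 0 with |P(x')| ≤ C(1+|x'|²)^{-n/2} for all x' ∈ ℝ^{n-1}; (b) ∫_{ℝ^{n-1}} P(x') dx' = 1; (c) the function K(x',t) := t^{1-n}P(x'/t) satisfies Σ_{r,s} a_{rs} ∂_r∂_s K = 0 pointwise in ℝⁿ₊ (with ∂_n = ∂_t). When A = I this P coincides with the classical harmonic Poisson kernel (2/ω_{n-1})(1+|x'|²)^{-n/2}. -/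

import Mathlib

open MeasureTheory Filter Metric Real
open scoped ENNReal NNReal Topology

noncomputable section

/-- The point `(x', t)` of `ℝⁿ`, where `x' ∈ ℝ^{n-1}` and `t ∈ ℝ` is the last coordinate. -/
def toUp {n : ℕ} (x' : EuclideanSpace ℝ (Fin (n - 1))) (t : ℝ) :
    EuclideanSpace ℝ (Fin n) :=
  (WithLp.equiv 2 (Fin n → ℝ)).symm
    (fun i => if h : (i : ℕ) < n - 1 then x' ⟨i, h⟩ else t)

/-- The first `n-1` coordinates of a point of `ℝⁿ`. -/
def xinit {n : ℕ} (x : EuclideanSpace ℝ (Fin n)) : EuclideanSpace ℝ (Fin (n - 1)) :=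
  (WithLp.equiv 2 (Fin (n - 1) → ℝ)).symm
    (fun i => x ⟨(i : ℕ), Nat.lt_of_lt_of_le i.isLt (Nat.sub_le n 1)⟩)

/-- The last coordinate of a point of `ℝⁿ`. -/
def xlast {n : ℕ} (x : EuclideanSpace ℝ (Fin n)) : ℝ :=
  if h : 0 < n then x ⟨n - 1, by omega⟩ else 0

/-- The upper half space `ℝⁿ₊`. -/
def upperHalfSpace (n : ℕ) : Set (EuclideanSpace ℝ (Fin n)) := {x | 0 < xlast x}

/-- The embedding `Fin (n-1) → Fin n`. -/
def finUp {n : ℕ} (i : Fin (n - 1)) : Fin n :=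
  ⟨(i : ℕ), Nat.lt_of_lt_of_le i.isLt (Nat.sub_le n 1)⟩

/-- The last index of `Fin n`. -/
def lastIdx (n : ℕ) (h : 0 < n) : Fin n := ⟨n - 1, by omega⟩

/-- Partial derivative along the `i`-th coordinate direction. -/
def pd {n : ℕ} {F : Type*} [NormedAddCommGroup F] [NormedSpace ℝ F]
    (i : Fin n) (u : EuclideanSpace ℝ (Fin n) → F) (x : EuclideanSpace ℝ (Fin n)) : F :=
  fderiv ℝ u x (EuclideanSpace.single i 1)

/-- Iterated mixed partial derivative along the string of coordinate directions `d`. -/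
def mpd {n : ℕ} {F : Type*} [NormedAddCommGroup F] [NormedSpace ℝ F]
    (k : ℕ) (d : Fin k → Fin n) (u : EuclideanSpace ℝ (Fin n) → F)
    (x : EuclideanSpace ℝ (Fin n)) : F :=
  iteratedFDeriv ℝ k u x (fun i => EuclideanSpace.single (d i) 1)

/-- The nontangential approach filter for the cone `Γ_κ(x')` (points written as `(y', t)`). -/
def ntFilter {n : ℕ} (κ : ℝ) (x' : EuclideanSpace ℝ (Fin (n - 1))) :
    Filter ((EuclideanSpace ℝ (Fin (n - 1))) × ℝ) :=
  (nhds (x', (0 : ℝ))) ⊓ Filter.principal {q | 0 < q.2 ∧ dist x' q.1 < κ * q.2}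

/-- The nontangential maximal function (aperture `κ`) of `u : ℝⁿ → F`,
as an `ℝ≥0∞`-valued function on `ℝ^{n-1}`. -/
def ntMax {n : ℕ} {F : Type*} [NormedAddCommGroup F] (κ : ℝ)
    (u : EuclideanSpace ℝ (Fin n) → F) (x' : EuclideanSpace ℝ (Fin (n - 1))) : ℝ≥0∞ :=
  ⨆ (y' : EuclideanSpace ℝ (Fin (n - 1))) (t : ℝ) (_ : 0 < t ∧ dist x' y' < κ * t),
    (‖u (toUp y' t)‖₊ : ℝ≥0∞)

/-- The `L^p` norm (`p ∈ (0,∞]`) of an `ℝ≥0∞`-valued function on `ℝ^m`. -/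
def lpNormE {m : ℕ} (g : EuclideanSpace ℝ (Fin m) → ℝ≥0∞) (p : ℝ≥0∞) : ℝ≥0∞ :=
  if p = ∞ then essSup g volume
  else (∫⁻ x', (g x') ^ p.toReal) ^ (1 / p.toReal)

/-- The Hardy–Littlewood maximal function. -/
def hlMax {m : ℕ} {F : Type*} [NormedAddCommGroup F]
    (f : EuclideanSpace ℝ (Fin m) → F) (x' : EuclideanSpace ℝ (Fin m)) : ℝ≥0∞ :=
  ⨆ (r : ℝ) (_ : 0 < r),
    (volume (ball x' r))⁻¹ * ∫⁻ y' in ball x' r, (‖f y'‖₊ : ℝ≥0∞)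

/-- The Legendre-Hadamard ellipticity condition for the coefficient tensor `A`,
where `A r s α β` stands for `a^{αβ}_{rs}`. -/
def LegendreHadamard {n M : ℕ} (A : Fin n → Fin n → Fin M → Fin M → ℂ) : Prop :=
  ∃ κ₀ : ℝ, 0 < κ₀ ∧ ∀ (ξ : Fin n → ℝ) (η : Fin M → ℂ),
    κ₀ * (∑ r, ξ r ^ 2) * (∑ a, ‖η a‖ ^ 2) ≤
      (∑ r, ∑ s, ∑ a, ∑ b, A r s a b * ξ r * ξ s * (starRingEnd ℂ) (η a) * η b).re

/-- `g` is the weak (distributional) mixed partial derivative of `f` of order `k`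
along the string of directions `d`. -/
def IsWeakDeriv {m : ℕ} {F : Type*} [NormedAddCommGroup F] [NormedSpace ℝ F]
    (k : ℕ) (d : Fin k → Fin m) (f g : EuclideanSpace ℝ (Fin m) → F) : Prop :=
  ∀ φ : EuclideanSpace ℝ (Fin m) → ℝ, ContDiff ℝ (⊤ : ℕ∞) φ → HasCompactSupport φ →
    ∫ x', (mpd k d φ x') • f x' = ((-1 : ℝ) ^ k) • ∫ x', φ x' • g x'

/-- The surface area `ω_{n-1}` of the unit sphere `S^{n-1}` in `ℝⁿ`. -/
def sphereArea (n : ℕ) : ℝ :=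
  (n : ℝ) * (volume (ball (0 : EuclideanSpace ℝ (Fin n)) (1 : ℝ))).toReal

/-- The parabolic dilation `F_t(x') = t^{1-n} F(x'/t)` of a matrix-valued kernel. -/
def matDil {n M : ℕ} (P : EuclideanSpace ℝ (Fin (n - 1)) → Matrix (Fin M) (Fin M) ℂ)
    (t : ℝ) (x' : EuclideanSpace ℝ (Fin (n - 1))) : Matrix (Fin M) (Fin M) ℂ :=
  (t ^ ((1 : ℤ) - (n : ℤ))) • P (t⁻¹ • x')

/-- The convolution `(P_t * f)(x')` of a dilated matrix kernel with a `ℂ^M`-valued function. -/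
def matConv {n M : ℕ} (P : EuclideanSpace ℝ (Fin (n - 1)) → Matrix (Fin M) (Fin M) ℂ)
    (f : EuclideanSpace ℝ (Fin (n - 1)) → EuclideanSpace ℂ (Fin M))
    (t : ℝ) (x' : EuclideanSpace ℝ (Fin (n - 1))) : EuclideanSpace ℂ (Fin M) :=
  (WithLp.equiv 2 (Fin M → ℂ)).symm
    (fun γ => ∫ y', ∑ α, matDil P t (x' - y') γ α * f y' α)

/-!
Write `S` for the symmetric part of `A` and `Q x = ⟨S⁻¹ x, x⟩`. Diagonalising the real and
imaginary parts of `S⁻¹` simultaneously by a real congruence gives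
`(∫ exp (-Q x) dx)² = πⁿ det S`, so the Gaussian integral selects a square root `d` of `det S`.
Since `Q` is homogeneous of degree two, integrating `exp (-Q)` along the rays through the points
`(x', 1)` also gives `∫ exp (-Q x) dx = Γ(n/2) ∫ Q(x', 1)^{-n/2} dx'`; comparing the two evaluations
yields the normalisation of the Poisson kernel without any analytic continuation in `S`.

In the upper half space `K` is a constant multiple of `t Q(x)^{-n/2}`, and for linear `ℓ` the
operator acts by `L (ℓ Q^a) = 2 a (n + 2 a) ℓ Q^{a-1}`, which vanishes for `a = -n/2`.
-/

section QuadraticForm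

open scoped Matrix

variable {ι : Type*}

lemma isSymm_symmetrize (A : Matrix ι ι ℂ) : (((1 : ℂ) / 2) • (A + Aᵀ)).IsSymm :=
  (Matrix.isSymm_add_transpose_self A).smul _

variable [Fintype ι]

/-- The bilinear pairing `⟨B x, x⟩` of a complex matrix with a real vector. -/
def quadForm (B : Matrix ι ι ℂ) (x : ι → ℝ) : ℂ :=
  ∑ r, ∑ s, B r s * (x r : ℂ) * (x s : ℂ)

/-- Strong ellipticity of the constant-coefficient operator `Σ B_{rs} ∂_r ∂_s`. -/
def IsElliptic (B : Matrix ι ι ℂ) : Prop :=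
  ∀ x : ι → ℝ, x ≠ 0 → 0 < (quadForm B x).re

lemma quadForm_eq_dotProduct_mulVec (B : Matrix ι ι ℂ) (x : ι → ℝ) :
    quadForm B x = (fun i => (x i : ℂ)) ⬝ᵥ B *ᵥ (fun i => (x i : ℂ)) := by
  simp only [quadForm, dotProduct, Matrix.mulVec, Finset.mul_sum]
  exact Finset.sum_congr rfl fun r _ => Finset.sum_congr rfl fun s _ => by ring

lemma re_quadForm (B : Matrix ι ι ℂ) (x : ι → ℝ) :
    (quadForm B x).re = x ⬝ᵥ B.map Complex.re *ᵥ x := by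
  simp only [quadForm_eq_dotProduct_mulVec, dotProduct, Matrix.mulVec, Complex.re_sum,
    Complex.re_ofReal_mul, Complex.re_mul_ofReal, Matrix.map_apply]

@[fun_prop]
lemma continuous_quadForm (B : Matrix ι ι ℂ) : Continuous (quadForm B) := by
  unfold quadForm
  fun_prop

lemma quadForm_smul (B : Matrix ι ι ℂ) (t : ℝ) (x : ι → ℝ) :
    quadForm B (t • x) = (t : ℂ) ^ 2 * quadForm B x := by
  simp only [quadForm, Finset.mul_sum, Pi.smul_apply, smul_eq_mul, Complex.ofReal_mul]
  exact Finset.sum_congr rfl fun r _ => Finset.sum_congr rfl fun s _ => by ring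

lemma sum_symmetrize_mul (A : Matrix ι ι ℂ) {H : ι → ι → ℂ} (hH : ∀ r s, H r s = H s r) :
    ∑ r, ∑ s, (((1 : ℂ) / 2) • (A + Aᵀ)) r s * H r s = ∑ r, ∑ s, A r s * H r s := by
  have htranspose : ∑ r, ∑ s, Aᵀ r s * H r s = ∑ r, ∑ s, A r s * H r s := by
    rw [Finset.sum_comm]
    exact Finset.sum_congr rfl fun r _ => Finset.sum_congr rfl fun s _ => by
      rw [Matrix.transpose_apply, hH]
  simp only [Matrix.smul_apply, Matrix.add_apply, smul_eq_mul, add_mul, mul_add, mul_assoc,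
    Finset.sum_add_distrib, ← Finset.mul_sum, htranspose]
  ring

lemma quadForm_symmetrize (A : Matrix ι ι ℂ) (x : ι → ℝ) :
    quadForm (((1 : ℂ) / 2) • (A + Aᵀ)) x = quadForm A x := by
  simpa only [quadForm, mul_assoc] using
    sum_symmetrize_mul A (H := fun r s => (x r : ℂ) * x s) fun r s => mul_comm _ _

lemma quadForm_conj (B : Matrix ι ι ℂ) (K : Matrix ι ι ℝ) (x : ι → ℝ) :
    quadForm ((K.map Complex.ofReal)ᵀ * B * K.map Complex.ofReal) x = quadForm B (K *ᵥ x) := by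
  have h : (K.map Complex.ofReal) *ᵥ (fun i => (x i : ℂ)) = fun i => ((K *ᵥ x) i : ℂ) := by
    ext i
    simp only [Matrix.mulVec, dotProduct, Matrix.map_apply, Complex.ofReal_sum,
      Complex.ofReal_mul]
  rw [quadForm_eq_dotProduct_mulVec, quadForm_eq_dotProduct_mulVec, ← Matrix.mulVec_mulVec,
    ← Matrix.mulVec_mulVec, h, Matrix.dotProduct_mulVec, Matrix.vecMul_transpose, h]

lemma IsElliptic.posDef_map_re {B : Matrix ι ι ℂ} (hB : IsElliptic B) (hsymm : B.IsSymm) :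
    (B.map Complex.re).PosDef :=
  Matrix.posDef_iff_dotProduct_mulVec.mpr
    ⟨Matrix.isHermitian_iff_isSymm.mpr (hsymm.map _), fun x hx => by
      simpa only [star_trivial, re_quadForm] using hB x hx⟩

variable [DecidableEq ι]

lemma quadForm_diagonal (μ : ι → ℂ) (x : ι → ℝ) :
    quadForm (Matrix.diagonal μ) x = ∑ i, μ i * (x i : ℂ) ^ 2 := by
  simp only [quadForm_eq_dotProduct_mulVec, dotProduct, Matrix.mulVec_diagonal]
  exact Finset.sum_congr rfl fun i _ => by ring

lemma quadForm_one (x : ι → ℝ) :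
    quadForm (1 : Matrix ι ι ℂ) x = ((∑ i, x i ^ 2 : ℝ) : ℂ) := by
  simp [← Matrix.diagonal_one, quadForm_diagonal]

lemma isElliptic_diagonal {μ : ι → ℂ} (hμ : ∀ i, 0 < (μ i).re) :
    IsElliptic (Matrix.diagonal μ) := by
  intro x hx
  obtain ⟨i, hi⟩ := Function.ne_iff.mp hx
  have hre : (quadForm (Matrix.diagonal μ) x).re = ∑ i, (μ i).re * x i ^ 2 := by
    simp only [quadForm_diagonal, Complex.re_sum, ← Complex.ofReal_pow, Complex.re_mul_ofReal]
  rw [hre]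
  exact Finset.sum_pos' (fun j _ => mul_nonneg (hμ j).le (sq_nonneg _))
    ⟨i, Finset.mem_univ i, mul_pos (hμ i) (sq_pos_of_ne_zero hi)⟩

lemma IsElliptic.conj {B : Matrix ι ι ℂ} (hB : IsElliptic B) {K : Matrix ι ι ℝ}
    (hK : K.det ≠ 0) :
    IsElliptic ((K.map Complex.ofReal)ᵀ * B * K.map Complex.ofReal) := by
  intro x hx
  rw [quadForm_conj]
  refine hB _ fun h => hx ?_
  exact Matrix.eq_zero_of_mulVec_eq_zero hK h

lemma exists_orthogonal_diagonalization {N : Matrix ι ι ℝ} (hN : N.IsSymm) :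
    ∃ (U : Matrix ι ι ℝ) (d : ι → ℝ), U * Uᵀ = 1 ∧ N = U * Matrix.diagonal d * Uᵀ :=
  have hN' : N.IsHermitian := Matrix.isHermitian_iff_isSymm.mpr hN
  ⟨hN'.eigenvectorUnitary.1, hN'.eigenvalues, Unitary.coe_mul_star_self hN'.eigenvectorUnitary,
    hN'.spectral_theorem⟩

open scoped MatrixOrder in
lemma exists_simultaneous_diagonalization {R M : Matrix ι ι ℝ} (hR : R.PosDef) (hM : M.IsSymm) :
    ∃ (K : Matrix ι ι ℝ) (d : ι → ℝ),
      K.det ≠ 0 ∧ R = Kᵀ * K ∧ M = Kᵀ * Matrix.diagonal d * K := by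
  obtain ⟨T, hT⟩ := CStarAlgebra.nonneg_iff_eq_star_mul_self.mp hR.posSemidef.nonneg
  replace hT : R = Tᵀ * T := hT
  have hTdet : IsUnit T.det := by
    have hRdet : R.det ≠ 0 := hR.det_pos.ne'
    rw [hT, Matrix.det_mul] at hRdet
    exact (right_ne_zero_of_mul hRdet).isUnit
  have hsymm : ((T⁻¹)ᵀ * M * T⁻¹).IsSymm := by
    rw [Matrix.IsSymm, Matrix.transpose_mul, Matrix.transpose_mul,
      Matrix.transpose_transpose, hM.eq, Matrix.mul_assoc]
  obtain ⟨U, d, hUU, hspec⟩ := exists_orthogonal_diagonalization hsymm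
  refine ⟨Uᵀ * T, d, ?_, ?_, ?_⟩
  · rw [Matrix.det_mul]
    exact mul_ne_zero (Matrix.det_ne_zero_of_left_inverse hUU) hTdet.ne_zero
  · rw [hT, Matrix.transpose_mul, Matrix.transpose_transpose, Matrix.mul_assoc,
      ← Matrix.mul_assoc U, hUU, Matrix.one_mul]
  · have hTM : Tᵀ * ((T⁻¹)ᵀ * M * T⁻¹) * T = M := by
      rw [← Matrix.mul_assoc, ← Matrix.mul_assoc, ← Matrix.transpose_mul,
        Matrix.nonsing_inv_mul _ hTdet, Matrix.transpose_one, Matrix.one_mul, Matrix.mul_assoc,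
        Matrix.nonsing_inv_mul _ hTdet, Matrix.mul_one]
    rw [← hTM, hspec]
    simp only [Matrix.transpose_mul, Matrix.transpose_transpose, Matrix.mul_assoc]

lemma IsElliptic.exists_eq_conj_diagonal {B : Matrix ι ι ℂ} (hB : IsElliptic B)
    (hsymm : B.IsSymm) :
    ∃ (K : Matrix ι ι ℝ) (μ : ι → ℂ), K.det ≠ 0 ∧ (∀ i, 0 < (μ i).re) ∧
      B = (K.map Complex.ofReal)ᵀ * Matrix.diagonal μ * K.map Complex.ofReal := by
  obtain ⟨K, d, hK, hre, him⟩ :=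
    exists_simultaneous_diagonalization (hB.posDef_map_re hsymm) (hsymm.map Complex.im)
  refine ⟨K, fun i => 1 + d i * Complex.I, hK, fun i => by simp, ?_⟩
  ext r s
  have hre' := congrFun₂ hre r s
  have him' := congrFun₂ him r s
  simp only [Matrix.map_apply] at hre' him'
  rw [← Complex.re_add_im (B r s), hre', him', Matrix.mul_apply,
    Matrix.mul_apply, Matrix.mul_apply]
  simp only [Matrix.mul_diagonal, Matrix.transpose_apply, Matrix.map_apply,
    Complex.ofReal_sum, Complex.ofReal_mul, Finset.sum_mul, ← Finset.sum_add_distrib]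
  exact Finset.sum_congr rfl fun i _ => by ring

lemma det_conj_diagonal (K : Matrix ι ι ℝ) (μ : ι → ℂ) :
    ((K.map Complex.ofReal)ᵀ * Matrix.diagonal μ * K.map Complex.ofReal).det
      = (K.det : ℂ) ^ 2 * ∏ i, μ i := by
  have hdet : (K.map Complex.ofReal).det = (K.det : ℂ) :=
    (RingHom.map_det Complex.ofRealHom K).symm
  rw [Matrix.det_mul, Matrix.det_mul, Matrix.det_transpose, Matrix.det_diagonal, hdet]
  ring

lemma IsElliptic.det_ne_zero {B : Matrix ι ι ℂ} (hB : IsElliptic B) (hsymm : B.IsSymm) :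
    B.det ≠ 0 := by
  obtain ⟨K, μ, hK, hμ, rfl⟩ := hB.exists_eq_conj_diagonal hsymm
  have hμ0 : ∀ i, μ i ≠ 0 := fun i h => by simpa [h] using hμ i
  rw [det_conj_diagonal]
  exact mul_ne_zero (pow_ne_zero 2 (Complex.ofReal_ne_zero.mpr hK))
    (Finset.prod_ne_zero_iff.mpr fun i _ => hμ0 i)

lemma IsElliptic.inv {B : Matrix ι ι ℂ} (hB : IsElliptic B) (hsymm : B.IsSymm) :
    IsElliptic B⁻¹ := by
  obtain ⟨K, μ, hK, hμ, rfl⟩ := hB.exists_eq_conj_diagonal hsymm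
  have hμinv : ∀ i, 0 < ((μ i)⁻¹).re := fun i => by
    have hμ0 : μ i ≠ 0 := fun h => by simpa [h] using hμ i
    rw [Complex.inv_re]
    exact div_pos (hμ i) (Complex.normSq_pos.mpr hμ0)
  have hKK : K.map Complex.ofReal * K⁻¹.map Complex.ofReal = 1 := by
    have h : (K * K⁻¹).map Complex.ofRealHom = 1 := by
      rw [Matrix.mul_nonsing_inv _ hK.isUnit, Matrix.map_one _ (map_zero _) (map_one _)]
    rwa [Matrix.map_mul] at h
  have hdiag : Matrix.diagonal μ * Matrix.diagonal (fun i => (μ i)⁻¹) = 1 := by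
    rw [Matrix.diagonal_mul_diagonal, ← Matrix.diagonal_one]
    exact congrArg _ (funext fun i => mul_inv_cancel₀ fun h => by simpa [h] using hμ i)
  have hKinv : (K⁻¹)ᵀ.det ≠ 0 := by
    rw [Matrix.det_transpose, Matrix.det_nonsing_inv, Ring.inverse_eq_inv']
    exact inv_ne_zero hK
  convert (isElliptic_diagonal hμinv).conj hKinv using 1
  refine Matrix.inv_eq_right_inv ?_
  calc _ = (K.map Complex.ofReal)ᵀ * (Matrix.diagonal μ *
        (K.map Complex.ofReal * K⁻¹.map Complex.ofReal) *
          Matrix.diagonal (fun i => (μ i)⁻¹)) * (K⁻¹.map Complex.ofReal)ᵀ := by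
        simp only [Matrix.transpose_map, Matrix.transpose_transpose, Matrix.mul_assoc]
    _ = 1 := by
        rw [hKK, Matrix.mul_one, hdiag, Matrix.mul_one, ← Matrix.transpose_mul,
          mul_eq_one_comm.mp hKK, Matrix.transpose_one]

end QuadraticForm

section Gaussian

open scoped Matrix

variable {ι : Type*} [Fintype ι]

lemma integrable_cexp_neg_sum_mul_sq {μ : ι → ℂ} (hμ : ∀ i, 0 < (μ i).re) :
    Integrable (fun x : ι → ℝ => Complex.exp (-∑ i, μ i * (x i : ℂ) ^ 2)) := by
  simpa only [Pi.zero_apply, zero_mul, Finset.sum_const_zero, add_zero]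
    using GaussianFourier.integrable_cexp_neg_sum_mul_add hμ 0

lemma integral_cexp_neg_sum_mul_sq {μ : ι → ℂ} (hμ : ∀ i, 0 < (μ i).re) :
    ∫ x : ι → ℝ, Complex.exp (-∑ i, μ i * (x i : ℂ) ^ 2) = ∏ i, (π / μ i) ^ (1 / 2 : ℂ) := by
  simpa only [Pi.zero_apply, zero_mul, Finset.sum_const_zero, add_zero, ne_eq,
    OfNat.ofNat_ne_zero, not_false_eq_true, zero_pow, zero_div, Complex.exp_zero, mul_one]
    using GaussianFourier.integral_cexp_neg_sum_mul_add hμ 0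

variable [DecidableEq ι]

lemma map_mulVec_volume {K : Matrix ι ι ℝ} (hK : K.det ≠ 0) :
    Measure.map (K *ᵥ ·) volume = ENNReal.ofReal |K.det⁻¹| • (volume : Measure (ι → ℝ)) :=
  Real.map_matrix_volume_pi_eq_smul_volume_pi hK

lemma measurableEmbedding_mulVec {K : Matrix ι ι ℝ} (hK : K.det ≠ 0) :
    MeasurableEmbedding (K *ᵥ ·) :=
  (LinearMap.isClosedEmbedding_of_injective (f := K.mulVecLin)
    (Matrix.ker_mulVecLin_eq_bot_iff.mpr fun _ =>
      Matrix.eq_zero_of_mulVec_eq_zero hK)).measurableEmbedding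

variable {E : Type*} [NormedAddCommGroup E]

lemma integral_comp_mulVec [NormedSpace ℝ E] {K : Matrix ι ι ℝ} (hK : K.det ≠ 0)
    (f : (ι → ℝ) → E) : ∫ x, f (K *ᵥ x) = |K.det⁻¹| • ∫ x, f x := by
  rw [← (measurableEmbedding_mulVec hK).integral_map f, map_mulVec_volume hK,
    integral_smul_measure, ENNReal.toReal_ofReal (abs_nonneg _)]

lemma integrable_comp_mulVec {K : Matrix ι ι ℝ} (hK : K.det ≠ 0)
    {f : (ι → ℝ) → E} (hf : Integrable f) : Integrable (fun x => f (K *ᵥ x)) := by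
  refine ((measurableEmbedding_mulVec hK).integrable_map_iff).mp ?_
  rw [map_mulVec_volume hK]
  exact hf.smul_measure ENNReal.ofReal_ne_top

lemma IsElliptic.sq_integral_cexp_neg_quadForm_mul_det {B : Matrix ι ι ℂ} (hB : IsElliptic B)
    (hsymm : B.IsSymm) :
    (∫ x : ι → ℝ, Complex.exp (-quadForm B x)) ^ 2 * B.det = (π : ℂ) ^ Fintype.card ι := by
  obtain ⟨K, μ, hK, hμ, rfl⟩ := hB.exists_eq_conj_diagonal hsymm
  have hμ0 : ∀ i, μ i ≠ 0 := fun i h => by simpa [h] using hμ i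
  have hdet : ((|K.det⁻¹| : ℝ) : ℂ) ^ 2 * (K.det : ℂ) ^ 2 = 1 := by
    rw [← Complex.ofReal_pow, sq_abs, ← Complex.ofReal_pow, ← Complex.ofReal_mul, ← mul_pow,
      inv_mul_cancel₀ hK, one_pow, Complex.ofReal_one]
  have hprod : (∏ i, (π / μ i) ^ (1 / 2 : ℂ)) ^ 2 * ∏ i, μ i = (π : ℂ) ^ Fintype.card ι := by
    rw [← Finset.prod_pow, ← Finset.prod_mul_distrib, ← Finset.card_univ, ← Finset.prod_const]
    refine Finset.prod_congr rfl fun i _ => ?_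
    rw [← Complex.cpow_nat_mul, Nat.cast_ofNat, mul_one_div_cancel two_ne_zero,
      Complex.cpow_one, div_mul_cancel₀ _ (hμ0 i)]
  simp only [quadForm_conj, quadForm_diagonal]
  rw [integral_comp_mulVec hK (fun y => Complex.exp (-∑ i, μ i * (y i : ℂ) ^ 2)),
    integral_cexp_neg_sum_mul_sq hμ, det_conj_diagonal, Complex.real_smul]
  linear_combination (∏ i, (π / μ i) ^ (1 / 2 : ℂ)) ^ 2 * (∏ i, μ i) * hdet + hprod

/-- The square root of `det S`, for `S` elliptic and symmetric, selected by the Gaussian integral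
`∫ exp (-⟨S⁻¹ x, x⟩) dx = π^{n/2} √(det S)`. -/
def detSqrt (S : Matrix ι ι ℂ) : ℂ :=
  (∫ x : ι → ℝ, Complex.exp (-quadForm S⁻¹ x)) / √π ^ Fintype.card ι

lemma IsElliptic.detSqrt_sq {S : Matrix ι ι ℂ} (hS : IsElliptic S) (hsymm : S.IsSymm) :
    detSqrt S ^ 2 = S.det := by
  have hgauss := (hS.inv hsymm).sq_integral_cexp_neg_quadForm_mul_det hsymm.inv
  have hdet := hS.det_ne_zero hsymm
  have hsqrt : (√π : ℂ) ^ 2 = π := by rw [← Complex.ofReal_pow, Real.sq_sqrt pi_pos.le]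
  rw [Matrix.det_nonsing_inv, Ring.inverse_eq_inv', ← div_eq_mul_inv, div_eq_iff hdet] at hgauss
  rw [detSqrt, div_pow, hgauss, pow_right_comm, hsqrt,
    mul_div_cancel_left₀ _ (pow_ne_zero _ (Complex.ofReal_ne_zero.mpr pi_ne_zero))]

lemma IsElliptic.detSqrt_ne_zero {S : Matrix ι ι ℂ} (hS : IsElliptic S) (hsymm : S.IsSymm) :
    detSqrt S ≠ 0 := fun h =>
  hS.det_ne_zero hsymm (by rw [← hS.detSqrt_sq hsymm, h, zero_pow two_ne_zero])

lemma detSqrt_one : detSqrt (1 : Matrix ι ι ℂ) = 1 := by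
  have hpi : (π : ℂ) ^ (1 / 2 : ℂ) = √π := by
    rw [Real.sqrt_eq_rpow, Complex.ofReal_cpow pi_pos.le]
    norm_num
  have hgauss := integral_cexp_neg_sum_mul_sq (μ := fun _ : ι => (1 : ℂ)) fun _ => one_pos
  simp only [← quadForm_diagonal, Matrix.diagonal_one, div_one, hpi, Finset.prod_const,
    Finset.card_univ] at hgauss
  rw [detSqrt, inv_one, hgauss, div_self]
  exact pow_ne_zero _ (Complex.ofReal_ne_zero.mpr (Real.sqrt_pos.mpr pi_pos).ne')

end Gaussian

lemma IsElliptic.integrable_cexp_neg_quadForm {ι : Type*} [Fintype ι]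
    {B : Matrix ι ι ℂ} (hB : IsElliptic B) (hsymm : B.IsSymm) :
    Integrable (fun x : ι → ℝ => Complex.exp (-quadForm B x)) := by
  classical
  obtain ⟨K, μ, hK, hμ, rfl⟩ := hB.exists_eq_conj_diagonal hsymm
  simp only [quadForm_conj, quadForm_diagonal]
  exact integrable_comp_mulVec hK (integrable_cexp_neg_sum_mul_sq hμ)

section GaussianMoments

lemma ofReal_mul_cpow {a : ℝ} (ha : 0 < a) {z : ℂ} (hz : z ≠ 0) (w : ℂ) :
    ((a : ℂ) * z) ^ w = (a : ℂ) ^ w * z ^ w := by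
  have ha' : (a : ℂ) ≠ 0 := Complex.ofReal_ne_zero.mpr ha.ne'
  rw [Complex.cpow_def_of_ne_zero (mul_ne_zero ha' hz), Complex.cpow_def_of_ne_zero ha',
    Complex.cpow_def_of_ne_zero hz, Complex.log_ofReal_mul ha hz, ← Complex.exp_add,
    Complex.ofReal_log ha.le]
  ring_nf

variable {q : ℂ}

lemma norm_pow_mul_cexp_neg_sq_mul (m : ℕ) (q : ℂ) (t : ℝ) :
    ‖(t : ℂ) ^ m * Complex.exp (-((t : ℂ) ^ 2 * q))‖ = |t| ^ m * rexp (-q.re * t ^ 2) := by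
  rw [norm_mul, norm_pow, Complex.norm_real, Real.norm_eq_abs, Complex.norm_exp,
    ← Complex.ofReal_pow, Complex.neg_re, Complex.re_ofReal_mul]
  ring_nf

lemma integrable_pow_mul_cexp_neg_sq_mul (hq : 0 < q.re) (m : ℕ) :
    Integrable (fun t : ℝ => (t : ℂ) ^ m * Complex.exp (-((t : ℂ) ^ 2 * q))) := by
  have hm : (-1 : ℝ) < m := neg_one_lt_zero.trans_le m.cast_nonneg
  refine (integrable_rpow_mul_exp_neg_mul_sq hq hm).norm.mono' (by fun_prop)
    (Eventually.of_forall fun t => le_of_eq ?_)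
  rw [norm_pow_mul_cexp_neg_sq_mul, norm_mul, Real.rpow_natCast, norm_pow, Real.norm_eq_abs,
    Real.norm_of_nonneg (Real.exp_pos _).le]

lemma tendsto_pow_mul_cexp_neg_sq_mul (hq : 0 < q.re) (m : ℕ) :
    Tendsto (fun t : ℝ => (t : ℂ) ^ m * Complex.exp (-((t : ℂ) ^ 2 * q))) atTop (𝓝 0) := by
  have hexp : Tendsto (fun t : ℝ => rexp (-(1 / 2) * t)) atTop (𝓝 0) :=
    Real.tendsto_exp_atBot.comp (tendsto_id.const_mul_atTop_of_neg (by norm_num))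
  rw [tendsto_zero_iff_norm_tendsto_zero]
  refine ((rpow_mul_exp_neg_mul_sq_isLittleO_exp_neg hq m).isBigO.trans_tendsto hexp).congr' ?_
  filter_upwards [eventually_gt_atTop 0] with t ht
  rw [norm_pow_mul_cexp_neg_sq_mul, Real.rpow_natCast, abs_of_pos ht]

lemma integral_pow_add_two_mul_cexp_neg_sq_mul_Ioi (hq : 0 < q.re) (m : ℕ) :
    2 * q * ∫ t in Set.Ioi (0 : ℝ), (t : ℂ) ^ (m + 2) * Complex.exp (-((t : ℂ) ^ 2 * q))
      = (m + 1) * ∫ t in Set.Ioi (0 : ℝ), (t : ℂ) ^ m * Complex.exp (-((t : ℂ) ^ 2 * q)) := by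
  have hintegrable := fun k =>
    (integrable_pow_mul_cexp_neg_sq_mul hq k).integrableOn (s := Set.Ioi 0)
  have hderiv : ∀ t : ℝ, HasDerivAt
      (fun t : ℝ => (t : ℂ) ^ (m + 1) * Complex.exp (-((t : ℂ) ^ 2 * q)))
      ((m + 1) * ((t : ℂ) ^ m * Complex.exp (-((t : ℂ) ^ 2 * q)))
        - 2 * q * ((t : ℂ) ^ (m + 2) * Complex.exp (-((t : ℂ) ^ 2 * q)))) t := by
    intro t
    convert ((hasDerivAt_pow (m + 1) (t : ℂ)).fun_mul
      ((hasDerivAt_pow 2 (t : ℂ)).mul_const q).fun_neg.cexp).comp_ofReal using 1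
    push_cast
    ring
  have hFTC := integral_Ioi_of_hasDerivAt_of_tendsto (a := (0 : ℝ))
    (hderiv 0).continuousAt.continuousWithinAt (fun t _ => hderiv t)
    (((hintegrable m).const_mul _).sub ((hintegrable (m + 2)).const_mul _))
    (tendsto_pow_mul_cexp_neg_sq_mul hq (m + 1))
  rw [integral_sub ((hintegrable m).const_mul _) ((hintegrable (m + 2)).const_mul _),
    integral_const_mul, integral_const_mul, Complex.ofReal_zero, zero_pow m.succ_ne_zero,
    zero_mul, sub_zero] at hFTC
  linear_combination -hFTC

lemma integral_pow_mul_cexp_neg_sq_mul_Ioi (hq : 0 < q.re) (m : ℕ) :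
    ∫ t in Set.Ioi (0 : ℝ), (t : ℂ) ^ m * Complex.exp (-((t : ℂ) ^ 2 * q))
      = 1 / 2 * Complex.Gamma ((m + 1) / 2) * q ^ (-(m + 1 : ℂ) / 2) := by
  have hq0 : q ≠ 0 := fun h => by simp [h] at hq
  have harg : q.arg ≠ π := fun h => (Complex.arg_eq_pi_iff.mp h).1.not_gt hq
  have hcomm : ∀ t : ℝ, -((t : ℂ) ^ 2 * q) = -q * (t : ℂ) ^ 2 := fun t => by ring
  induction m using Nat.twoStepInduction with
  | zero =>
    simp only [pow_zero, one_mul, hcomm, Nat.cast_zero, zero_add, Complex.Gamma_one_half_eq]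
    rw [integral_gaussian_complex_Ioi hq, div_eq_mul_inv (π : ℂ),
      ofReal_mul_cpow pi_pos (inv_ne_zero hq0), Complex.inv_cpow _ _ harg, ← Complex.cpow_neg]
    ring_nf
  | one =>
    simp only [pow_one, hcomm, Nat.cast_one, one_add_one_eq_two, div_self (two_ne_zero' ℂ),
      neg_div, Complex.Gamma_one, Complex.cpow_neg_one]
    rw [integral_mul_cexp_neg_mul_sq hq]
    ring
  | more m ih _ =>
    have hm : ((m : ℂ) + 1) / 2 ≠ 0 := div_ne_zero (Nat.cast_add_one_ne_zero m) two_ne_zero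
    apply mul_left_cancel₀ (mul_ne_zero two_ne_zero hq0)
    rw [integral_pow_add_two_mul_cexp_neg_sq_mul_Ioi hq, ih,
      show ((m + 2 : ℕ) + 1 : ℂ) / 2 = (m + 1) / 2 + 1 by push_cast; ring,
      Complex.Gamma_add_one _ hm,
      show -((m + 2 : ℕ) + 1 : ℂ) / 2 = -(m + 1) / 2 - 1 by push_cast; ring,
      Complex.cpow_sub _ _ hq0, Complex.cpow_one]
    field_simp

end GaussianMoments

section Slicing

variable {E : Type*} [NormedAddCommGroup E] [NormedSpace ℝ E] [FiniteDimensional ℝ E]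
  [MeasurableSpace E] [BorelSpace E] {μ : Measure E} [μ.IsAddHaarMeasure]
  {F : Type*} [NormedAddCommGroup F] [NormedSpace ℝ F]

lemma pow_finrank_smul_integral_comp_smul (f : E → F) {t : ℝ} (ht : 0 < t) :
    t ^ Module.finrank ℝ E • ∫ y, f (t • y) ∂μ = ∫ y, f y ∂μ := by
  rw [Measure.integral_comp_smul, abs_of_pos (by positivity), smul_smul,
    mul_inv_cancel₀ (by positivity), one_smul]

lemma integral_prod_eq_two_smul_of_even {f : ℝ × E → F} (hf : Integrable f (volume.prod μ))
    (heven : ∀ p, f (-p) = f p) :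
    ∫ p, f p ∂volume.prod μ = (2 : ℝ) • ∫ t in Set.Ioi (0 : ℝ), ∫ y, f (t, y) ∂μ := by
  have hslice : ∀ t, ∫ y, f (-t, y) ∂μ = ∫ y, f (t, y) ∂μ := fun t => by
    rw [← integral_neg_eq_self]
    exact integral_congr_ae (Eventually.of_forall fun y => heven (t, y))
  have hintegrable := hf.integral_prod_left
  rw [integral_prod _ hf, ← intervalIntegral.integral_Iic_add_Ioi (b := (0 : ℝ))
    hintegrable.integrableOn hintegrable.integrableOn, two_smul]
  congr 1
  simpa only [hslice, neg_zero] using integral_comp_neg_Iic (0 : ℝ) fun t => ∫ y, f (t, y) ∂μ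

lemma integrable_pow_finrank_smul_comp_smul {f : ℝ × E → F} (hf : Integrable f (volume.prod μ))
    (hmeas : StronglyMeasurable f) :
    Integrable (fun p : ℝ × E => p.1 ^ Module.finrank ℝ E • f (p.1, p.1 • p.2))
      ((volume.restrict (Set.Ioi 0)).prod μ) := by
  have hcone : Measurable fun p : ℝ × E => (p.1, p.1 • p.2) := by fun_prop
  have hpow : StronglyMeasurable fun p : ℝ × E => p.1 ^ Module.finrank ℝ E :=
    (measurable_fst.pow_const _).stronglyMeasurable
  have hsm : StronglyMeasurable fun p : ℝ × E =>
      p.1 ^ Module.finrank ℝ E • f (p.1, p.1 • p.2) := hpow.smul (hmeas.comp_measurable hcone)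
  rw [integrable_prod_iff hsm.aestronglyMeasurable]
  constructor
  · rw [ae_restrict_iff' measurableSet_Ioi]
    filter_upwards [hf.prod_right_ae] with t ht ht0
    exact (ht.comp_smul (ne_of_gt ht0)).smul (t ^ Module.finrank ℝ E)
  · refine (hf.integral_norm_prod_left.integrableOn (s := Set.Ioi 0)).congr ?_
    filter_upwards [ae_restrict_mem measurableSet_Ioi] with t ht
    have ht0 : 0 < t := ht
    simp only [norm_smul, norm_pow, Real.norm_of_nonneg ht0.le]
    rw [integral_const_mul]
    exact (pow_finrank_smul_integral_comp_smul (fun y => ‖f (t, y)‖) ht0).symm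

lemma integral_Ioi_integral_eq_integral_comp_smul {f : ℝ × E → F}
    (hf : Integrable f (volume.prod μ)) (hmeas : StronglyMeasurable f) :
    ∫ t in Set.Ioi (0 : ℝ), ∫ y, f (t, y) ∂μ
      = ∫ y, (∫ t in Set.Ioi (0 : ℝ), t ^ Module.finrank ℝ E • f (t, t • y)) ∂μ := by
  rw [← integral_integral_swap (f := fun t y => t ^ Module.finrank ℝ E • f (t, t • y))
    (integrable_pow_finrank_smul_comp_smul hf hmeas)]
  refine setIntegral_congr_fun measurableSet_Ioi fun t ht => ?_
  simp only [integral_smul]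
  exact (pow_finrank_smul_integral_comp_smul (fun y => f (t, y)) ht).symm

theorem integral_cexp_neg_of_homogeneous {q : ℝ × E → ℂ} (hcont : Continuous q)
    (hhom : ∀ (t : ℝ) (p : ℝ × E), q (t • p) = (t : ℂ) ^ 2 * q p)
    (hre : ∀ y, 0 < (q (1, y)).re)
    (hintegrable : Integrable (fun p => Complex.exp (-q p)) (volume.prod μ)) :
    ∫ p, Complex.exp (-q p) ∂volume.prod μ = Complex.Gamma ((Module.finrank ℝ E + 1) / 2)
      * ∫ y, q (1, y) ^ (-(Module.finrank ℝ E + 1 : ℂ) / 2) ∂μ := by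
  have heven : ∀ p, Complex.exp (-q (-p)) = Complex.exp (-q p) := fun p => by
    rw [← neg_one_smul ℝ p, hhom, Complex.ofReal_neg, Complex.ofReal_one, neg_one_sq, one_mul]
  have hray : ∀ (t : ℝ) y, q (t, t • y) = (t : ℂ) ^ 2 * q (1, y) := fun t y => by
    rw [← hhom, Prod.smul_mk, smul_eq_mul, mul_one]
  have hmeas : StronglyMeasurable fun p => Complex.exp (-q p) :=
    (Complex.continuous_exp.comp hcont.neg).stronglyMeasurable
  rw [integral_prod_eq_two_smul_of_even hintegrable heven,
    integral_Ioi_integral_eq_integral_comp_smul hintegrable hmeas]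
  simp only [hray, Complex.real_smul, Complex.ofReal_pow,
    integral_pow_mul_cexp_neg_sq_mul_Ioi (hre _), integral_const_mul]
  push_cast
  ring

end Slicing

section Coordinates

variable {n : ℕ}

lemma toUp_apply (x' : EuclideanSpace ℝ (Fin (n - 1))) (t : ℝ) (i : Fin n) :
    toUp x' t i = if h : (i : ℕ) < n - 1 then x' ⟨i, h⟩ else t :=
  rfl

lemma toUp_smul (c : ℝ) (x' : EuclideanSpace ℝ (Fin (n - 1))) (t : ℝ) :
    (toUp (c • x') (c * t) : EuclideanSpace ℝ (Fin n)) = c • toUp x' t := by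
  ext i
  simp only [toUp_apply, PiLp.smul_apply, smul_eq_mul]
  split_ifs <;> rfl

lemma continuous_toUp :
    Continuous fun p : ℝ × EuclideanSpace ℝ (Fin (n - 1)) =>
      (toUp p.2 p.1 : EuclideanSpace ℝ (Fin n)) := by
  refine (PiLp.continuous_toLp 2 _).comp (continuous_pi fun i => ?_)
  split_ifs <;> fun_prop

lemma continuous_xlast : Continuous (xlast : EuclideanSpace ℝ (Fin n) → ℝ) := by
  unfold xlast
  split_ifs <;> fun_prop

lemma isOpen_upperHalfSpace : IsOpen (upperHalfSpace n) :=
  isOpen_lt continuous_const continuous_xlast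

variable [NeZero n]

lemma xlast_eq (x : EuclideanSpace ℝ (Fin n)) : xlast x = x (lastIdx n (NeZero.pos n)) :=
  dif_pos (NeZero.pos n)

lemma xlast_toUp (x' : EuclideanSpace ℝ (Fin (n - 1))) (t : ℝ) :
    xlast (toUp x' t : EuclideanSpace ℝ (Fin n)) = t := by
  simp [xlast_eq, toUp_apply, lastIdx]

lemma toUp_xinit_xlast (x : EuclideanSpace ℝ (Fin n)) : toUp (xinit x) (xlast x) = x := by
  ext i
  rw [toUp_apply]
  split_ifs with h
  · rfl
  · have hi : i = lastIdx n (NeZero.pos n) := Fin.ext (by simp only [lastIdx]; omega)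
    rw [xlast_eq, hi]

lemma toUp_mem_upperHalfSpace {t : ℝ} (ht : 0 < t) (x' : EuclideanSpace ℝ (Fin (n - 1))) :
    toUp x' t ∈ upperHalfSpace n := by
  rwa [upperHalfSpace, Set.mem_ofPred_eq, xlast_toUp]

lemma ne_zero_of_mem_upperHalfSpace {x : EuclideanSpace ℝ (Fin n)} (hx : x ∈ upperHalfSpace n) :
    x ≠ 0 := by
  rintro rfl
  simp [upperHalfSpace, xlast_eq] at hx

lemma norm_toUp_sq (x' : EuclideanSpace ℝ (Fin (n - 1))) (t : ℝ) :
    ‖(toUp x' t : EuclideanSpace ℝ (Fin n))‖ ^ 2 = t ^ 2 + ‖x'‖ ^ 2 := by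
  obtain ⟨m, rfl⟩ := Nat.exists_eq_succ_of_ne_zero (NeZero.ne n)
  rw [EuclideanSpace.real_norm_sq_eq, EuclideanSpace.real_norm_sq_eq, Fin.sum_univ_castSucc,
    add_comm]
  simp [toUp_apply]

lemma measurePreserving_toUp :
    MeasurePreserving
      (fun p : ℝ × EuclideanSpace ℝ (Fin (n - 1)) => (toUp p.2 p.1).ofLp)
      (volume.prod volume) (volume : Measure (Fin n → ℝ)) := by
  obtain ⟨m, rfl⟩ := Nat.exists_eq_succ_of_ne_zero (NeZero.ne n)
  have hsnoc : (fun p : ℝ × EuclideanSpace ℝ (Fin m) => (toUp (n := m + 1) p.2 p.1).ofLp)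
      = (MeasurableEquiv.piFinSuccAbove (fun _ => ℝ) (Fin.last m)).symm ∘
          Prod.map id WithLp.ofLp := by
    ext p i
    induction i using Fin.lastCases <;> simp [toUp_apply]
  change MeasurePreserving
    (fun p : ℝ × EuclideanSpace ℝ (Fin m) => (toUp (n := m + 1) p.2 p.1).ofLp) _ _
  rw [hsnoc]
  exact ((volume_preserving_piFinSuccAbove (fun _ => ℝ) (Fin.last m)).symm).comp
    ((MeasurePreserving.id volume).prod (PiLp.volume_preserving_ofLp (Fin m)))

lemma sphereArea_eq : sphereArea n = 2 * √π ^ n / Real.Gamma (n / 2) := by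
  have hn : (0 : ℝ) < n := Nat.cast_pos.mpr (NeZero.pos n)
  rw [sphereArea, EuclideanSpace.volume_ball, Fintype.card_fin,
    Real.Gamma_add_one (half_pos hn).ne',
    ENNReal.ofReal_one, one_pow, one_mul, ENNReal.toReal_ofReal (by positivity)]
  field_simp

lemma sphereArea_pos : 0 < sphereArea n := by
  have hGamma := Real.Gamma_pos_of_pos (half_pos (Nat.cast_pos.mpr (NeZero.pos n)))
  rw [sphereArea_eq]
  positivity

end Coordinates

section PartialDerivatives

open scoped Matrix

variable {n : ℕ} {u v : EuclideanSpace ℝ (Fin n) → ℂ} {x : EuclideanSpace ℝ (Fin n)}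

lemma pd_congr (h : u =ᶠ[𝓝 x] v) (r : Fin n) : pd r u x = pd r v x := by
  rw [pd, pd, h.fderiv_eq]

lemma pd_add (hu : DifferentiableAt ℝ u x) (hv : DifferentiableAt ℝ v x) (r : Fin n) :
    pd r (fun y => u y + v y) x = pd r u x + pd r v x := by
  rw [pd, fderiv_fun_add hu hv]
  rfl

lemma pd_mul (hu : DifferentiableAt ℝ u x) (hv : DifferentiableAt ℝ v x) (r : Fin n) :
    pd r (fun y => u y * v y) x = pd r u x * v x + u x * pd r v x := by
  simp only [pd, fderiv_fun_mul hu hv, add_apply, smul_apply, smul_eq_mul]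
  ring

lemma pd_const (c : ℂ) (r : Fin n) : pd r (fun _ => c) x = 0 := by
  rw [pd, fderiv_fun_const]
  rfl

lemma pd_clm (ℓ : EuclideanSpace ℝ (Fin n) →L[ℝ] ℂ) (r : Fin n) :
    pd r ℓ x = ℓ (EuclideanSpace.single r 1) := by
  rw [pd, ℓ.fderiv]

lemma hasFDerivAt_cpow_const (hu : DifferentiableAt ℝ u x) (hx : u x ∈ Complex.slitPlane)
    (a : ℂ) : HasFDerivAt (fun y => u y ^ a) ((a * u x ^ (a - 1)) • fderiv ℝ u x) x := by
  simpa only [mul_one, id_eq, Function.comp_def] using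
    ((hasDerivAt_id (u x)).cpow_const (c := a) hx).comp_hasFDerivAt x hu.hasFDerivAt

lemma pd_cpow (hu : DifferentiableAt ℝ u x) (hx : u x ∈ Complex.slitPlane) (a : ℂ) (r : Fin n) :
    pd r (fun y => u y ^ a) x = a * u x ^ (a - 1) * pd r u x := by
  rw [pd, (hasFDerivAt_cpow_const hu hx a).fderiv]
  rfl

lemma clm_apply_eq_sum (ℓ : EuclideanSpace ℝ (Fin n) →L[ℝ] ℂ) (x : EuclideanSpace ℝ (Fin n)) :
    ℓ x = ∑ r, ℓ (EuclideanSpace.single r 1) * x r := by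
  conv_lhs => rw [← (EuclideanSpace.basisFun (Fin n) ℝ).sum_repr x, map_sum]
  simp [mul_comm]

/-- The continuous linear functional `x ↦ (B x)_s`. -/
def rowCLM (B : Matrix (Fin n) (Fin n) ℂ) (s : Fin n) : EuclideanSpace ℝ (Fin n) →L[ℝ] ℂ :=
  ∑ j, B s j • Complex.ofRealCLM.comp (EuclideanSpace.proj j)

variable (B : Matrix (Fin n) (Fin n) ℂ)

lemma rowCLM_apply (s : Fin n) (x : EuclideanSpace ℝ (Fin n)) :
    rowCLM B s x = (B *ᵥ fun i => (x i : ℂ)) s := by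
  simp [rowCLM, Matrix.mulVec, dotProduct]

lemma rowCLM_single (s r : Fin n) : rowCLM B s (EuclideanSpace.single r 1) = B s r := by
  simp [rowCLM_apply, Matrix.mulVec, dotProduct, apply_ite]

lemma quadForm_eq_sum_rowCLM (x : EuclideanSpace ℝ (Fin n)) :
    quadForm B x = ∑ r, (x r : ℂ) * rowCLM B r x := by
  simp only [quadForm_eq_dotProduct_mulVec, dotProduct, rowCLM_apply]

lemma differentiable_quadForm :
    Differentiable ℝ fun x : EuclideanSpace ℝ (Fin n) => quadForm B x := by
  unfold quadForm
  fun_prop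

variable {B}

lemma pd_quadForm (hB : B.IsSymm) (s : Fin n) :
    pd s (fun y => quadForm B y) x = 2 * rowCLM B s x := by
  have hderiv : HasFDerivAt (fun y : EuclideanSpace ℝ (Fin n) => quadForm B y)
      (∑ r, ((x r : ℂ) • rowCLM B r +
        rowCLM B r x • Complex.ofRealCLM.comp (EuclideanSpace.proj r))) x := by
    simp only [quadForm_eq_sum_rowCLM]
    exact HasFDerivAt.fun_sum fun r _ =>
      (Complex.ofRealCLM.comp (EuclideanSpace.proj r)).hasFDerivAt.mul (rowCLM B r).hasFDerivAt
  have hrow : ∑ r, (x r : ℂ) * B r s = rowCLM B s x := by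
    rw [rowCLM_apply]
    exact Finset.sum_congr rfl fun r _ => by rw [hB.apply, mul_comm]
  rw [pd, hderiv.fderiv]
  simp [Finset.sum_add_distrib, rowCLM_single, hrow, apply_ite, two_mul]

lemma pd_mul_quadForm_cpow (hB : B.IsSymm) (hu : DifferentiableAt ℝ u x)
    (hx : 0 < (quadForm B x).re) (a : ℂ) (s : Fin n) :
    pd s (fun y => u y * quadForm B y ^ a) x
      = pd s u x * quadForm B x ^ a + 2 * a * (rowCLM B s x * u x) * quadForm B x ^ (a - 1) := by
  have hQ := (differentiable_quadForm B) x
  rw [pd_mul hu (hasFDerivAt_cpow_const hQ (.inl hx) a).differentiableAt,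
    pd_cpow hQ (.inl hx), pd_quadForm hB]
  ring

lemma pd_pd_clm_mul_quadForm_cpow (hB : B.IsSymm) (ℓ : EuclideanSpace ℝ (Fin n) →L[ℝ] ℂ)
    (hx : 0 < (quadForm B x).re) (a : ℂ) (r s : Fin n) :
    pd r (pd s fun y => ℓ y * quadForm B y ^ a) x
      = 2 * a * quadForm B x ^ (a - 1) * (ℓ (EuclideanSpace.single s 1) * rowCLM B r x
          + ℓ (EuclideanSpace.single r 1) * rowCLM B s x + ℓ x * B r s)
        + 4 * a * (a - 1) * ℓ x * quadForm B x ^ (a - 2) * (rowCLM B r x * rowCLM B s x) := by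
  have hopen : IsOpen {y : EuclideanSpace ℝ (Fin n) | 0 < (quadForm B y).re} :=
    isOpen_lt continuous_const (by fun_prop)
  have hfirst : (pd s fun y => ℓ y * quadForm B y ^ a) =ᶠ[𝓝 x] fun y =>
      ℓ (EuclideanSpace.single s 1) * quadForm B y ^ a
        + 2 * a * (rowCLM B s y * ℓ y) * quadForm B y ^ (a - 1) := by
    filter_upwards [hopen.mem_nhds hx] with y hy
    rw [pd_mul_quadForm_cpow hB ℓ.differentiableAt hy, pd_clm]
  have hQ (b : ℂ) : DifferentiableAt ℝ (fun y => quadForm B y.ofLp ^ b) x :=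
    (hasFDerivAt_cpow_const (differentiable_quadForm B x) (.inl hx) b).differentiableAt
  have hrow : DifferentiableAt ℝ (fun y => rowCLM B s y * ℓ y) x := by fun_prop
  rw [pd_congr hfirst, pd_add ((hQ a).const_mul _) ((hrow.const_mul _).fun_mul (hQ _)),
    pd_mul_quadForm_cpow hB (differentiableAt_const _) hx,
    pd_mul_quadForm_cpow hB (hrow.const_mul _) hx, pd_mul (differentiableAt_const _) hrow,
    pd_mul (rowCLM B s).differentiableAt ℓ.differentiableAt, pd_const, pd_const, pd_clm, pd_clm,
    rowCLM_single, hB.apply, sub_sub, one_add_one_eq_two]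
  ring

lemma sum_mul_mul_rowCLM {S : Matrix (Fin n) (Fin n) ℂ} (hSB : S * B = 1) (c : Fin n → ℂ)
    (x : EuclideanSpace ℝ (Fin n)) :
    ∑ r, ∑ s, S r s * (c r * rowCLM B s x) = ∑ r, c r * x r := by
  refine Finset.sum_congr rfl fun r _ => ?_
  have hrow : ∑ s, S r s * rowCLM B s x = x r := by
    have h := congrFun (Matrix.mulVec_mulVec (fun i => (x i : ℂ)) S B) r
    rw [hSB, Matrix.one_mulVec] at h
    simpa only [rowCLM_apply, Matrix.mulVec, dotProduct] using h
  rw [← hrow, Finset.mul_sum]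
  exact Finset.sum_congr rfl fun s _ => mul_left_comm _ _ _

lemma sum_mul_pd_pd_clm_mul_quadForm_cpow {S : Matrix (Fin n) (Fin n) ℂ} (hS : S.IsSymm)
    (hB : B.IsSymm) (hSB : S * B = 1) (ℓ : EuclideanSpace ℝ (Fin n) →L[ℝ] ℂ)
    (hx : 0 < (quadForm B x).re) (a : ℂ) :
    ∑ r, ∑ s, S r s * pd r (pd s fun y => ℓ y * quadForm B y ^ a) x
      = 2 * a * (n + 2 * a) * ℓ x * quadForm B x ^ (a - 1) := by
  have hright : ∑ r, ∑ s, S r s * (ℓ (EuclideanSpace.single r 1) * rowCLM B s x) = ℓ x := by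
    rw [sum_mul_mul_rowCLM hSB, ← clm_apply_eq_sum]
  have hleft : ∑ r, ∑ s, S r s * (ℓ (EuclideanSpace.single s 1) * rowCLM B r x) = ℓ x := by
    rw [← hright, Finset.sum_comm]
    simp only [hS.apply]
  have htrace : ∑ r, ∑ s, S r s * B r s = n := by
    have h : (S * B).trace = n := by rw [hSB, Matrix.trace_one, Fintype.card_fin]
    simpa only [Matrix.trace, Matrix.diag_apply, Matrix.mul_apply, hB.apply] using h
  have hquad : ∑ r, ∑ s, S r s * (rowCLM B r x * rowCLM B s x) = quadForm B x := by
    simp only [sum_mul_mul_rowCLM hSB, quadForm_eq_sum_rowCLM, mul_comm]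
  have hQ : quadForm B x ^ (a - 2) * quadForm B x = quadForm B x ^ (a - 1) := by
    have hQ0 : quadForm B x ≠ 0 := fun h => by simp [h] at hx
    rw [show a - 1 = a - 2 + 1 by ring, Complex.cpow_add _ _ hQ0, Complex.cpow_one]
  calc ∑ r, ∑ s, S r s * pd r (pd s fun y => ℓ y * quadForm B y ^ a) x
      = 2 * a * quadForm B x ^ (a - 1) *
          (∑ r, ∑ s, S r s * (ℓ (EuclideanSpace.single s 1) * rowCLM B r x)
            + ∑ r, ∑ s, S r s * (ℓ (EuclideanSpace.single r 1) * rowCLM B s x)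
            + ℓ x * ∑ r, ∑ s, S r s * B r s)
          + 4 * a * (a - 1) * ℓ x * quadForm B x ^ (a - 2) *
            ∑ r, ∑ s, S r s * (rowCLM B r x * rowCLM B s x) := by
        simp only [Finset.mul_sum, ← Finset.sum_add_distrib]
        refine Finset.sum_congr rfl fun r _ => Finset.sum_congr rfl fun s _ => ?_
        rw [pd_pd_clm_mul_quadForm_cpow hB ℓ hx]
        ring
    _ = 2 * a * (n + 2 * a) * ℓ x * quadForm B x ^ (a - 1) := by
        rw [hleft, hright, htrace, hquad]
        linear_combination 4 * a * (a - 1) * ℓ x * hQ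

end PartialDerivatives

section PoissonKernel

lemma exists_pos_mul_norm_sq_le {E : Type*} [NormedAddCommGroup E] [NormedSpace ℝ E]
    [ProperSpace E] {f : E → ℝ} (hcont : Continuous f)
    (hhom : ∀ (t : ℝ) x, f (t • x) = t ^ 2 * f x) (hpos : ∀ x, x ≠ 0 → 0 < f x) :
    ∃ c, 0 < c ∧ ∀ x, c * ‖x‖ ^ 2 ≤ f x := by
  obtain ⟨c, hc, hle⟩ := (isCompact_sphere (0 : E) 1).exists_forall_le' hcont.continuousOn
    fun x hx => hpos x (ne_zero_of_mem_unit_sphere ⟨x, hx⟩)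
  refine ⟨c, hc, fun x => ?_⟩
  rcases eq_or_ne x 0 with rfl | hx
  · simpa using (hhom 0 0).ge
  have hunit : ‖x‖⁻¹ • x ∈ sphere (0 : E) 1 := by simp [norm_smul, hx]
  calc c * ‖x‖ ^ 2 ≤ f (‖x‖⁻¹ • x) * ‖x‖ ^ 2 := by gcongr; exact hle _ hunit
    _ = f x := by rw [hhom]; field_simp

variable {n : ℕ}

lemma IsElliptic.re_quadForm_pos {B : Matrix (Fin n) (Fin n) ℂ} (hB : IsElliptic B)
    {x : EuclideanSpace ℝ (Fin n)} (hx : x ≠ 0) : 0 < (quadForm B x).re :=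
  hB x fun h => hx (WithLp.ofLp_injective 2 h)

lemma IsElliptic.exists_pos_mul_norm_sq_le {B : Matrix (Fin n) (Fin n) ℂ} (hB : IsElliptic B) :
    ∃ c, 0 < c ∧ ∀ x : EuclideanSpace ℝ (Fin n), c * ‖x‖ ^ 2 ≤ (quadForm B x).re :=
  _root_.exists_pos_mul_norm_sq_le (by fun_prop)
    (fun t x => by
      rw [WithLp.ofLp_smul, quadForm_smul, ← Complex.ofReal_pow, Complex.re_ofReal_mul])
    fun _ => hB.re_quadForm_pos

lemma IsElliptic.sum_mul_pd_pd_clm_mul_quadForm_inv_cpow {A S : Matrix (Fin n) (Fin n) ℂ}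
    (hS : IsElliptic S) (hA : S = ((1 : ℂ) / 2) • (A + A.transpose))
    (ℓ : EuclideanSpace ℝ (Fin n) →L[ℝ] ℂ) {x : EuclideanSpace ℝ (Fin n)} (hx : x ≠ 0) :
    ∑ r, ∑ s, A r s * pd r (pd s fun y => ℓ y * quadForm S⁻¹ y ^ (-(n : ℂ) / 2)) x = 0 := by
  have hsymm : S.IsSymm := hA ▸ isSymm_symmetrize A
  have hQ := (hS.inv hsymm).re_quadForm_pos hx
  have hHessian : ∀ r s, pd r (pd s fun y => ℓ y * quadForm S⁻¹ y ^ (-(n : ℂ) / 2)) x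
      = pd s (pd r fun y => ℓ y * quadForm S⁻¹ y ^ (-(n : ℂ) / 2)) x := fun r s => by
    rw [pd_pd_clm_mul_quadForm_cpow hsymm.inv ℓ hQ, pd_pd_clm_mul_quadForm_cpow hsymm.inv ℓ hQ,
      hsymm.inv.apply]
    ring
  rw [← sum_symmetrize_mul A hHessian, ← hA,
    sum_mul_pd_pd_clm_mul_quadForm_cpow hsymm hsymm.inv
      (S.mul_nonsing_inv (hS.det_ne_zero hsymm).isUnit) ℓ hQ]
  ring

/-- The Poisson kernel in `ℝⁿ₊`, up to a constant factor, of the operator whose symmetric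
coefficient matrix has inverse `B`: the function `x' ↦ ⟨B (x', 1), (x', 1)⟩^{-n/2}`. -/
def poissonProfile (B : Matrix (Fin n) (Fin n) ℂ) (x' : EuclideanSpace ℝ (Fin (n - 1))) : ℂ :=
  quadForm B (toUp x' 1) ^ (-(n : ℂ) / 2)

/-- The Poisson kernel in `ℝⁿ₊` of the operator with symmetric coefficient matrix `S`, normalised
by the square root `detSqrt S` of `det S`. -/
def halfSpacePoissonKernel (S : Matrix (Fin n) (Fin n) ℂ)
    (x' : EuclideanSpace ℝ (Fin (n - 1))) : ℂ :=
  2 / (sphereArea n * detSqrt S) * poissonProfile S⁻¹ x'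

variable [NeZero n]

lemma toUp_one_ne_zero (x' : EuclideanSpace ℝ (Fin (n - 1))) :
    (toUp x' 1 : EuclideanSpace ℝ (Fin n)) ≠ 0 :=
  ne_zero_of_mem_upperHalfSpace (toUp_mem_upperHalfSpace one_pos x')

lemma poissonProfile_one (x' : EuclideanSpace ℝ (Fin (n - 1))) :
    poissonProfile (1 : Matrix (Fin n) (Fin n) ℂ) x'
      = ((1 + ‖x'‖ ^ 2) ^ (-(n : ℝ) / 2) : ℝ) := by
  rw [poissonProfile, quadForm_one, ← EuclideanSpace.real_norm_sq_eq, norm_toUp_sq, one_pow,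
    Complex.ofReal_cpow (by positivity)]
  push_cast
  rfl

lemma IsElliptic.exists_norm_poissonProfile_le {B : Matrix (Fin n) (Fin n) ℂ}
    (hB : IsElliptic B) :
    ∃ C, 0 < C ∧ ∀ x', ‖poissonProfile B x'‖ ≤ C * (1 + ‖x'‖ ^ 2) ^ (-(n : ℝ) / 2) := by
  obtain ⟨c, hc, hcoercive⟩ := hB.exists_pos_mul_norm_sq_le
  refine ⟨c ^ (-(n : ℝ) / 2), by positivity, fun x' => ?_⟩
  have hle : c * (1 + ‖x'‖ ^ 2) ≤ ‖quadForm B (toUp x' 1)‖ := by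
    have h := hcoercive (toUp x' 1)
    rw [norm_toUp_sq, one_pow] at h
    exact h.trans (Complex.re_le_norm _)
  have hexp : (-(n : ℂ) / 2) = ((-(n : ℝ) / 2 : ℝ) : ℂ) := by push_cast; rfl
  rw [poissonProfile, hexp, Complex.norm_cpow_real, ← Real.mul_rpow hc.le (by positivity)]
  exact Real.rpow_le_rpow_of_nonpos (by positivity) hle
    (div_nonpos_of_nonpos_of_nonneg (neg_nonpos.mpr n.cast_nonneg) zero_le_two)

lemma IsElliptic.integral_cexp_neg_quadForm {B : Matrix (Fin n) (Fin n) ℂ} (hB : IsElliptic B)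
    (hsymm : B.IsSymm) :
    ∫ x : Fin n → ℝ, Complex.exp (-quadForm B x)
      = Complex.Gamma (n / 2) * ∫ x', poissonProfile B x' := by
  have hcont : Continuous fun p : ℝ × EuclideanSpace ℝ (Fin (n - 1)) =>
      quadForm B (toUp p.2 p.1) :=
    (continuous_quadForm B).comp ((PiLp.continuous_ofLp 2 _).comp continuous_toUp)
  have hmp := measurePreserving_toUp (n := n)
  have hexp : Continuous fun x : Fin n → ℝ => Complex.exp (-quadForm B x) := by fun_prop
  have hhom : ∀ (t : ℝ) (p : ℝ × EuclideanSpace ℝ (Fin (n - 1))),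
      quadForm B (toUp (t • p).2 (t • p).1) = (t : ℂ) ^ 2 * quadForm B (toUp p.2 p.1) :=
    fun t p => by
      rw [Prod.smul_snd, Prod.smul_fst, smul_eq_mul, toUp_smul, WithLp.ofLp_smul, quadForm_smul]
  have hdim : (Module.finrank ℝ (EuclideanSpace ℝ (Fin (n - 1))) + 1 : ℂ) = n := by
    rw [finrank_euclideanSpace_fin, Nat.cast_pred (NeZero.pos n), sub_add_cancel]
  rw [← hmp.map_eq, integral_map hmp.aemeasurable hexp.aestronglyMeasurable]
  simpa only [hdim, poissonProfile] using integral_cexp_neg_of_homogeneous hcont hhom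
    (fun y => hB.re_quadForm_pos (toUp_one_ne_zero y))
    (hmp.integrable_comp_of_integrable (hB.integrable_cexp_neg_quadForm hsymm))

variable {S : Matrix (Fin n) (Fin n) ℂ}

lemma halfSpacePoissonKernel_one (x' : EuclideanSpace ℝ (Fin (n - 1))) :
    halfSpacePoissonKernel (1 : Matrix (Fin n) (Fin n) ℂ) x'
      = ((2 / sphereArea n * (1 + ‖x'‖ ^ 2) ^ (-(n : ℝ) / 2) : ℝ) : ℂ) := by
  rw [halfSpacePoissonKernel, inv_one, poissonProfile_one, detSqrt_one]
  push_cast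
  rw [mul_one]

lemma IsElliptic.sphereArea_mul_detSqrt_ne_zero (hS : IsElliptic S) (hsymm : S.IsSymm) :
    sphereArea n * detSqrt S ≠ 0 :=
  mul_ne_zero (Complex.ofReal_ne_zero.mpr sphereArea_pos.ne') (hS.detSqrt_ne_zero hsymm)

lemma IsElliptic.exists_norm_halfSpacePoissonKernel_le (hS : IsElliptic S) (hsymm : S.IsSymm) :
    ∃ C, 0 < C ∧ ∀ x', ‖halfSpacePoissonKernel S x'‖ ≤ C * (1 + ‖x'‖ ^ 2) ^ (-(n : ℝ) / 2) := by
  obtain ⟨C, hC, hbound⟩ := (hS.inv hsymm).exists_norm_poissonProfile_le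
  have hconst := div_ne_zero two_ne_zero (hS.sphereArea_mul_detSqrt_ne_zero hsymm)
  refine ⟨_, mul_pos (norm_pos_iff.mpr hconst) hC, fun x' => ?_⟩
  rw [halfSpacePoissonKernel, norm_mul, mul_assoc]
  exact mul_le_mul_of_nonneg_left (hbound x') (norm_nonneg _)

lemma IsElliptic.integral_halfSpacePoissonKernel (hS : IsElliptic S) (hsymm : S.IsSymm) :
    ∫ x', halfSpacePoissonKernel S x' = 1 := by
  have hGamma : Complex.Gamma (n / 2) = Real.Gamma (n / 2) := by
    rw [← Complex.Gamma_ofReal]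
    push_cast
    rfl
  have hGamma0 : (Real.Gamma (n / 2) : ℂ) ≠ 0 := Complex.ofReal_ne_zero.mpr
    (Real.Gamma_pos_of_pos (half_pos (Nat.cast_pos.mpr (NeZero.pos n)))).ne'
  have hpi : (√π : ℂ) ^ n ≠ 0 :=
    pow_ne_zero n (Complex.ofReal_ne_zero.mpr (Real.sqrt_pos.mpr pi_pos).ne')
  have hprofile : 2 * ∫ x', poissonProfile S⁻¹ x' = sphereArea n * detSqrt S := by
    rw [detSqrt, (hS.inv hsymm).integral_cexp_neg_quadForm hsymm.inv, sphereArea_eq, hGamma,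
      Fintype.card_fin]
    push_cast
    field_simp
  simp only [halfSpacePoissonKernel]
  rw [integral_const_mul, div_mul_eq_mul_div, hprofile,
    div_self (hS.sphereArea_mul_detSqrt_ne_zero hsymm)]

lemma ofReal_inv_sq_cpow_neg_half {t : ℝ} (ht : 0 < t) (m : ℕ) :
    ((t⁻¹ ^ 2 : ℝ) : ℂ) ^ (-(m : ℂ) / 2) = (t : ℂ) ^ m := by
  have hexp : (-(m : ℂ) / 2) = ((-(m : ℝ) / 2 : ℝ) : ℂ) := by push_cast; rfl
  rw [hexp, ← Complex.ofReal_cpow (by positivity), ← Complex.ofReal_pow, ← Real.rpow_natCast,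
    ← Real.rpow_mul (by positivity), Real.inv_rpow ht.le, ← Real.rpow_neg ht.le,
    ← Real.rpow_natCast]
  congr 2
  push_cast
  ring

lemma IsElliptic.zpow_mul_poissonProfile {B : Matrix (Fin n) (Fin n) ℂ} (hB : IsElliptic B)
    {x : EuclideanSpace ℝ (Fin n)} (hx : x ∈ upperHalfSpace n) :
    (xlast x : ℂ) ^ ((1 : ℤ) - (n : ℤ)) * poissonProfile B ((xlast x)⁻¹ • xinit x)
      = xlast x * quadForm B x ^ (-(n : ℂ) / 2) := by
  have ht : 0 < xlast x := hx
  have hQ : quadForm B x ≠ 0 := fun h => by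
    simpa [h] using hB.re_quadForm_pos (ne_zero_of_mem_upperHalfSpace hx)
  have htoUp : (toUp ((xlast x)⁻¹ • xinit x) 1 : EuclideanSpace ℝ (Fin n)) = (xlast x)⁻¹ • x := by
    rw [← inv_mul_cancel₀ ht.ne', toUp_smul, toUp_xinit_xlast]
  rw [poissonProfile, htoUp, WithLp.ofLp_smul, quadForm_smul, ← Complex.ofReal_pow,
    ofReal_mul_cpow (by positivity) hQ, ofReal_inv_sq_cpow_neg_half ht, ← mul_assoc, ← zpow_natCast,
    ← zpow_add₀ (Complex.ofReal_ne_zero.mpr ht.ne'), sub_add_cancel, zpow_one]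

lemma IsElliptic.zpow_mul_halfSpacePoissonKernel (hS : IsElliptic S) (hsymm : S.IsSymm)
    {x : EuclideanSpace ℝ (Fin n)} (hx : x ∈ upperHalfSpace n) :
    (xlast x : ℂ) ^ ((1 : ℤ) - (n : ℤ)) * halfSpacePoissonKernel S ((xlast x)⁻¹ • xinit x)
      = 2 / (sphereArea n * detSqrt S) * xlast x * quadForm S⁻¹ x ^ (-(n : ℂ) / 2) := by
  rw [halfSpacePoissonKernel, mul_left_comm, (hS.inv hsymm).zpow_mul_poissonProfile hx, mul_assoc]

lemma IsElliptic.sum_mul_pd_pd_halfSpacePoissonKernel {A : Matrix (Fin n) (Fin n) ℂ}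
    (hS : IsElliptic S) (hA : S = ((1 : ℂ) / 2) • (A + A.transpose))
    {x : EuclideanSpace ℝ (Fin n)} (hx : x ∈ upperHalfSpace n) :
    ∑ r, ∑ s, A r s * pd r (pd s fun y =>
      (xlast y : ℂ) ^ ((1 : ℤ) - (n : ℤ)) * halfSpacePoissonKernel S ((xlast y)⁻¹ • xinit y)) x
        = 0 := by
  have hsymm : S.IsSymm := hA ▸ isSymm_symmetrize A
  let ℓ : EuclideanSpace ℝ (Fin n) →L[ℝ] ℂ := (2 / (sphereArea n * detSqrt S) : ℂ) •
    Complex.ofRealCLM.comp (EuclideanSpace.proj (lastIdx n (NeZero.pos n)))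
  have hkernel : (fun y : EuclideanSpace ℝ (Fin n) => (xlast y : ℂ) ^ ((1 : ℤ) - (n : ℤ))
        * halfSpacePoissonKernel S ((xlast y)⁻¹ • xinit y))
      =ᶠ[𝓝 x] fun y => ℓ y * quadForm S⁻¹ y ^ (-(n : ℂ) / 2) := by
    filter_upwards [isOpen_upperHalfSpace.mem_nhds hx] with y hy
    rw [hS.zpow_mul_halfSpacePoissonKernel hsymm hy, xlast_eq]
    rfl
  have hpd (s : Fin n) := hkernel.eventuallyEq_nhds.mono fun y hy => pd_congr hy s
  simp only [fun r s => pd_congr (hpd s) r]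
  exact hS.sum_mul_pd_pd_clm_mul_quadForm_inv_cpow hA ℓ (ne_zero_of_mem_upperHalfSpace hx)

end PoissonKernel

/-- For a scalar elliptic operator `L = Σ a_{rs}∂_r∂_s` in `ℝⁿ`, `n ≥ 2`,
and a suitable square root `d` of `det A_sym`, the function
`P(x') = (2/(ω_{n-1} d)) ⟨A_sym⁻¹(x',1),(x',1)⟩^{-n/2}` is a Poisson kernel for `L` in
`ℝⁿ₊`: it has the right decay, unit integral, and its parabolic dilation
`K(x',t) = t^{1-n}P(x'/t)` is an `L`-null solution in the upper half space; moreover,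
for `A = 1` it coincides with the classical harmonic Poisson kernel. -/
theorem statement8
    (n : ℕ) (hn : 2 ≤ n)
    (A : Matrix (Fin n) (Fin n) ℂ)
    (hell : ∀ ξ : EuclideanSpace ℝ (Fin n), ξ ≠ 0 →
      0 < (∑ r, ∑ s, A r s * (ξ r : ℂ) * (ξ s : ℂ)).re)
    (Asym : Matrix (Fin n) (Fin n) ℂ) (hAsym : Asym = ((1 : ℂ) / 2) • (A + A.transpose)) :
    ∃ d : ℂ, d ^ 2 = Asym.det ∧
      (let P : EuclideanSpace ℝ (Fin (n - 1)) → ℂ := fun x' =>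
        (2 / ((sphereArea n : ℂ) * d)) *
          (∑ r, ∑ s, Asym⁻¹ r s * ((toUp x' 1 r : ℝ) : ℂ) * ((toUp x' 1 s : ℝ) : ℂ))
            ^ (-(n : ℂ) / 2)
      (∃ C : ℝ, 0 < C ∧ ∀ x' : EuclideanSpace ℝ (Fin (n - 1)),
          ‖P x'‖ ≤ C * (1 + ‖x'‖ ^ 2) ^ (-(n : ℝ) / 2)) ∧
      (∫ x' : EuclideanSpace ℝ (Fin (n - 1)), P x') = 1 ∧
      (∀ x' : EuclideanSpace ℝ (Fin (n - 1)), ∀ t : ℝ, 0 < t →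
        (∑ r, ∑ s, A r s *
            pd r (pd s (fun x : EuclideanSpace ℝ (Fin n) =>
              ((xlast x : ℂ) ^ ((1 : ℤ) - (n : ℤ))) * P ((xlast x)⁻¹ • xinit x)))
              (toUp x' t)) = 0) ∧
      (A = 1 → ∀ x' : EuclideanSpace ℝ (Fin (n - 1)),
        P x' = ((2 / sphereArea n * (1 + ‖x'‖ ^ 2) ^ (-(n : ℝ) / 2) : ℝ) : ℂ))) := by
  have : NeZero n := ⟨by omega⟩
  have hsymm : Asym.IsSymm := hAsym ▸ isSymm_symmetrize A
  have hS : IsElliptic Asym := fun x hx => by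
    rw [hAsym, quadForm_symmetrize]
    exact hell (WithLp.toLp 2 x) fun h => hx (congrArg WithLp.ofLp h)
  refine ⟨detSqrt Asym, hS.detSqrt_sq hsymm, hS.exists_norm_halfSpacePoissonKernel_le hsymm,
    hS.integral_halfSpacePoissonKernel hsymm, fun x' t ht =>
      hS.sum_mul_pd_pd_halfSpacePoissonKernel hAsym (toUp_mem_upperHalfSpace ht x'),
    fun hA x' => ?_⟩
  have hone : Asym = 1 := by
    rw [hAsym, hA, Matrix.transpose_one, ← two_smul ℂ, smul_smul, one_div_mul_cancel two_ne_zero,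
      one_smul]
  subst hone
  exact halfSpacePoissonKernel_one x'

end
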